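/- Let χ₁ and χ₂ be characters of ℰ(X). Suppose there is α ∈ 𝕊_X such that χ₁(u) = χ₂(u) = u(α) for all u ∈ C(X̄), and that χ₁ = χ₂ on the subalgebra ℰ(X/[α]). Then χ₁ = χ₂ on all of ℰ(X). -/

import Mathlib

open Filter Topology Set MeasureTheory Bornology BoundedContinuousFunction

noncomputable section

section ConeDefs
variable {X : Type*} [SeminormedAddCommGroup X] [Module ℝ X]

/-- A cone: a set stable under multiplication by positive scalars. -/
def IsCone (D : Set X) : Prop := ∀ x ∈ D, ∀ r : ℝ, 0 < r → r • x ∈ D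

/-- A truncated cone: the intersection of a cone with the complement of a bounded set. -/
def IsTruncCone (C : Set X) : Prop :=
  ∃ D B : Set X, IsCone D ∧ Bornology.IsBounded B ∧ C = D ∩ Bᶜ

/-- The half-line through `a` is eventually in `C`. -/
def EvIn (a : X) (C : Set X) : Prop :=
  ∃ s : ℝ, 0 < s ∧ ∀ r : ℝ, 1 ≤ r → r • (s • a) ∈ C

/-- The filter of truncated-cone neighborhoods of the direction of `a`. -/
def coneFilter (a : X) : Filter X :=
  Filter.generate {C | IsOpen C ∧ IsTruncCone C ∧ EvIn a C}

/-- The half-line `α` is eventually in `C`. -/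
def RayEvIn (α : Module.Ray ℝ X) (C : Set X) : Prop :=
  ∃ (a : X) (ha : a ≠ 0), rayOfNeZero ℝ a ha = α ∧ ∀ r : ℝ, 1 ≤ r → r • a ∈ C

/-- The filter of truncated-cone neighborhoods of the half-line `α`. -/
def rayConeFilter (α : Module.Ray ℝ X) : Filter X :=
  Filter.generate {C | IsOpen C ∧ IsTruncCone C ∧ RayEvIn α C}

end ConeDefs

instance instRayVectorTop {X : Type*} [SeminormedAddCommGroup X] [Module ℝ X] :
    TopologicalSpace (RayVector ℝ X) :=
  inferInstanceAs (TopologicalSpace {v : X // v ≠ 0})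

/-- The sphere at infinity with the quotient topology from `X ∖ {0}`. -/
instance instSphereTop {X : Type*} [SeminormedAddCommGroup X] [Module ℝ X] :
    TopologicalSpace (Module.Ray ℝ X) :=
  inferInstanceAs (TopologicalSpace (Quotient (RayVector.Setoid ℝ X)))

/-- The spherical compactification `X̄ = X ⊔ 𝕊_X`. -/
def SphComp (X : Type*) [SeminormedAddCommGroup X] [Module ℝ X] : Type _ :=
  X ⊕ Module.Ray ℝ X

instance instSphCompTop {X : Type*} [SeminormedAddCommGroup X] [Module ℝ X] :
    TopologicalSpace (SphComp X) :=
  TopologicalSpace.generateFrom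
    ({s | ∃ O : Set X, IsOpen O ∧ s = Sum.inl '' O} ∪
     {s | ∃ C : Set X, IsOpen C ∧ IsTruncCone C ∧
          s = Sum.inl '' C ∪ Sum.inr '' {α : Module.Ray ℝ X | RayEvIn α C}})


section Algebras
variable (X : Type*) [NormedAddCommGroup X] [NormedSpace ℝ X]

/-- Generators `u ∘ π_Z`, `u ∈ C(overline{X/Z})`, over all subspaces `Z ⊇ Y`. -/
def QGenSet (Y : Submodule ℝ X) : Set (X →ᵇ ℂ) :=
  {u | ∃ Z : Submodule ℝ X, Y ≤ Z ∧ ∃ v : C(SphComp (X ⧸ Z), ℂ),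
      ∀ x : X, u x = v (Sum.inl (Submodule.Quotient.mk x))}

/-- The C*-algebra `ℰ(X/Y)`, realized inside the bounded continuous functions on `X`. -/
def EAlgY (Y : Submodule ℝ X) : StarSubalgebra ℂ (X →ᵇ ℂ) :=
  (StarAlgebra.adjoin ℂ (QGenSet X Y)).topologicalClosure

/-- The C*-algebra `ℰ(X)` of elementary interactions. -/
abbrev EAlg : StarSubalgebra ℂ (X →ᵇ ℂ) := EAlgY X ⊥

end Algebras

/-! A character `χ` of `ℰ(X)` that restricts to evaluation at `α` on `C(X̄)` takes the value `c` on
every `u` with `u(x) → c` as `x → α`: if `w ∈ C(X̄)` is a bump function at `α` supported where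
`u` is close to `c`, then `χ(u) - c = χ((u - c)w)` is small because characters are contractive. For
a generator `u = v ∘ π_Z` with `α ⊄ Z`, the projection `π_Z` extends continuously at `α`, so that
`u` has the limit `v(π_Z(α))` there, and `χ(u)` is determined. The generators with `α ⊂ Z` lie in
`ℰ(X/[α])`. The bump functions come from the radial compression `x ↦ (1 + ‖x‖)⁻¹ x`, which extends
to a continuous map from `X̄` to the closed unit ball. -/

theorem rayEvIn_rayOfNeZero_iff {X : Type*} [SeminormedAddCommGroup X] [Module ℝ X] {b : X}
    (hb : b ≠ 0) {C : Set X} :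
    RayEvIn (rayOfNeZero ℝ b hb) C ↔ EvIn b C := by
  constructor
  · rintro ⟨c, hc, hray, hcC⟩
    obtain ⟨s, hs, rfl⟩ := ((ray_eq_iff hc hb).1 hray).symm.exists_pos_left hb hc
    exact ⟨s, hs, hcC⟩
  · rintro ⟨s, hs, hsC⟩
    exact ⟨s • b, smul_ne_zero hs.ne' hb,
      (ray_eq_iff _ _).2 (SameRay.sameRay_pos_smul_left b hs), hsC⟩

section Quotient
variable {X : Type*} [SeminormedAddCommGroup X] [NormedSpace ℝ X]

theorem norm_mk_quotient_bot (x : X) :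
    ‖(Submodule.Quotient.mk x : X ⧸ (⊥ : Submodule ℝ X))‖ = ‖x‖ := by
  have hdist := QuotientAddGroup.norm_mk (S := (⊥ : Submodule ℝ X).toAddSubgroup) x
  exact hdist.trans (by simp)

/-- The identification of `X ⧸ ⊥` with `X`, as an isometry. -/
def quotientBotIsometry : (X ⧸ (⊥ : Submodule ℝ X)) ≃ₗᵢ[ℝ] X where
  toLinearEquiv := Submodule.quotEquivOfEqBot ⊥ rfl
  norm_map' y := by
    induction y using Submodule.Quotient.induction_on with
    | H x => exact (norm_mk_quotient_bot x).symm

theorem norm_mkQL_ne_zero {Z : Submodule ℝ X} (hZ : IsClosed (Z : Set X)) {a : X} (ha : a ∉ Z) :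
    ‖Z.mkQL a‖ ≠ 0 := fun h =>
  ha ((QuotientAddGroup.norm_mk_eq_zero (S := Z.toAddSubgroup) (hS := hZ)).1 h)

end Quotient

namespace SphComp

section Module
variable {X : Type*} [SeminormedAddCommGroup X] [Module ℝ X]

/-- The inclusion `X → X̄`, typed so that its target carries the topology of `SphComp X`. -/
def inl (x : X) : SphComp X := Sum.inl x

/-- The inclusion `𝕊_X → X̄`, typed so that its target carries the topology of `SphComp X`. -/
def inr (α : Module.Ray ℝ X) : SphComp X := Sum.inr α

theorem inl_injective : Function.Injective (inl : X → SphComp X) := Sum.inl_injective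

theorem inr_injective : Function.Injective (inr : Module.Ray ℝ X → SphComp X) :=
  Sum.inr_injective

theorem preimage_inl_image_inr (S : Set (Module.Ray ℝ X)) : inl ⁻¹' (inr '' S) = ∅ :=
  Set.preimage_inl_image_inr S

theorem preimage_inr_image_inl (S : Set X) : inr ⁻¹' (inl '' S) = ∅ :=
  Set.preimage_inr_image_inl S

theorem isOpen_image_inl {O : Set X} (hO : IsOpen O) : IsOpen (inl '' O) :=
  TopologicalSpace.isOpen_generateFrom_of_mem (Or.inl ⟨O, hO, rfl⟩)

theorem isOpen_image_inl_union_image_inr {C : Set X} (hC : IsOpen C) (htrunc : IsTruncCone C) :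
    IsOpen (inl '' C ∪ inr '' {α | RayEvIn α C}) :=
  TopologicalSpace.isOpen_generateFrom_of_mem (Or.inr ⟨C, hC, htrunc, rfl⟩)

theorem continuous_inl : Continuous (inl : X → SphComp X) := by
  refine continuous_generateFrom_iff.2 ?_
  rintro s (⟨O, hO, rfl⟩ | ⟨C, hC, -, rfl⟩)
  · exact (preimage_image_eq O inl_injective).symm ▸ hO
  · have hpre : inl ⁻¹' (inl '' C ∪ inr '' {α | RayEvIn α C}) = C := by
      rw [preimage_union, preimage_image_eq C inl_injective, preimage_inl_image_inr, union_empty]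
    exact hpre.symm ▸ hC

theorem isOpenEmbedding_inl : IsOpenEmbedding (inl : X → SphComp X) :=
  .of_continuous_injective_isOpenMap continuous_inl inl_injective fun _ => isOpen_image_inl

end Module

section Seminormed
variable {X : Type*} [SeminormedAddCommGroup X] [NormedSpace ℝ X]

theorem tendsto_inl_nhds_inr {ι : Type*} {l : Filter ι} {f : ι → X} {t : ι → ℝ} {b : X}
    (hb : ‖b‖ ≠ 0) (ht : Tendsto t l (𝓝[>] 0)) (htf : Tendsto (fun i => t i • f i) l (𝓝 b)) :
    Tendsto (fun i => inl (f i)) l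
      (𝓝 (inr (rayOfNeZero ℝ b (ne_zero_of_norm_ne_zero hb)))) := by
  have ht_pos : ∀ᶠ i in l, 0 < t i := ht.eventually self_mem_nhdsWithin
  have hf : Tendsto f l (cobounded X) := by
    rw [← tendsto_norm_atTop_iff_cobounded]
    refine (ht.inv_tendsto_nhdsGT_zero.atTop_mul_pos (by positivity) htf.norm).congr' ?_
    filter_upwards [ht_pos] with i hi
    rw [Pi.inv_apply, norm_smul, Real.norm_of_nonneg hi.le, inv_mul_cancel_left₀ hi.ne']
  refine TopologicalSpace.tendsto_nhds_generateFrom_iff.2 ?_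
  rintro _ (⟨O, -, rfl⟩ | ⟨C, hC, ⟨D, B, hD, hB, rfl⟩, rfl⟩) hmem
  · exact ((preimage_inr_image_inl O).subset hmem).elim
  · obtain ⟨s, hs, hsC⟩ : EvIn b (D ∩ Bᶜ) := by
      rw [← rayEvIn_rayOfNeZero_iff (ne_zero_of_norm_ne_zero hb)]
      rcases hmem with hmem | hmem
      · exact ((preimage_inr_image_inl _).subset hmem).elim
      · exact inr_injective.mem_set_image.1 hmem
    have hsb : s • b ∈ D ∩ Bᶜ := by simpa using hsC 1 le_rfl
    filter_upwards [ht_pos, (htf.const_smul s).eventually (hC.mem_nhds hsb),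
      hf.eventually (isBounded_def.1 hB)] with i hi hiD hiB
    have hfD : f i ∈ D := by
      have hmul : (s * t i)⁻¹ • s • t i • f i = f i := by
        rw [← mul_smul s, inv_smul_smul₀ (mul_pos hs hi).ne']
      exact hmul ▸ hD _ hiD.1 _ (by positivity)
    exact Or.inl ⟨f i, ⟨hfD, hiB⟩, rfl⟩

theorem eventually_nhds_inr_of_isCone {D : Set X} (hD : IsOpen D) (hcone : IsCone D) {b : X}
    (hb : ‖b‖ ≠ 0) (hbD : b ∈ D) (R : ℝ) :
    ∀ᶠ p in 𝓝 (inr (rayOfNeZero ℝ b (ne_zero_of_norm_ne_zero hb))),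
      (∃ x ∈ D, R < ‖x‖ ∧ inl x = p) ∨
        ∃ c, ∃ hc : c ≠ 0, c ∈ D ∧ inr (rayOfNeZero ℝ c hc) = p := by
  have hopen : IsOpen (D ∩ (Metric.closedBall 0 R)ᶜ) :=
    hD.inter Metric.isClosed_closedBall.isOpen_compl
  have hev : EvIn b (D ∩ (Metric.closedBall 0 R)ᶜ) := by
    have hs : 0 < (|R| + 1) / ‖b‖ := by positivity
    refine ⟨_, hs, fun r hr => ⟨hcone _ (hcone _ hbD _ hs) _ (by positivity), ?_⟩⟩
    have hnorm : ‖r • ((|R| + 1) / ‖b‖) • b‖ = r * (|R| + 1) := by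
      rw [norm_smul, norm_smul, Real.norm_of_nonneg hs.le, div_mul_cancel₀ _ hb,
        Real.norm_of_nonneg (by positivity)]
    rw [mem_compl_iff, mem_closedBall_zero_iff, hnorm, not_le]
    nlinarith [le_abs_self R, abs_nonneg R]
  filter_upwards [(isOpen_image_inl_union_image_inr hopen
    ⟨D, _, hcone, Metric.isBounded_closedBall, rfl⟩).mem_nhds
      (Or.inr ⟨_, (rayEvIn_rayOfNeZero_iff _).2 hev, rfl⟩)]
  rintro _ (⟨x, ⟨hxD, hxR⟩, rfl⟩ | ⟨_, ⟨c, hc, rfl, hcD⟩, rfl⟩)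
  · exact Or.inl ⟨x, hxD, by simpa using hxR, rfl⟩
  · exact Or.inr ⟨c, hc, by simpa using (hcD 1 le_rfl).1, rfl⟩

end Seminormed

section Normed
variable {X : Type*} [NormedAddCommGroup X] [NormedSpace ℝ X]

/-- The radial compression of `X̄` onto the closed unit ball, sending a half-line to its unit
vector. -/
def toBall : SphComp X → X :=
  Sum.elim (fun x => (1 + ‖x‖)⁻¹ • x) fun α => NormedSpace.normalize α.someVector

theorem toBall_inl (x : X) : toBall (inl x) = (1 + ‖x‖)⁻¹ • x := rfl

theorem map_toBall_inl {W : Type*} [NormedAddCommGroup W] [NormedSpace ℝ W] (e : X →ₗᵢ[ℝ] W)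
    (x : X) : e (toBall (inl x)) = toBall (inl (e x)) := by
  rw [toBall_inl, toBall_inl, map_smul, e.norm_map]

theorem toBall_inr {b : X} (hb : b ≠ 0) :
    toBall (inr (rayOfNeZero ℝ b hb)) = NormedSpace.normalize b :=
  (sameRay_iff_inv_norm_smul_eq_of_ne (Module.Ray.someVector_ne_zero _) hb).1 <|
    (ray_eq_iff _ hb).1 (Module.Ray.someVector_ray _)

theorem norm_toBall_inl (x : X) : ‖toBall (inl x)‖ = 1 - (1 + ‖x‖)⁻¹ := by
  rw [toBall_inl, norm_smul, Real.norm_of_nonneg (by positivity)]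
  field_simp
  ring

theorem dist_toBall_inl_normalize_le (x : X) :
    dist (toBall (inl x)) (NormedSpace.normalize x) ≤ ‖x‖⁻¹ := by
  obtain rfl | hx := eq_or_ne x 0
  · simp [toBall_inl]
  have hx' : 0 < ‖x‖ := norm_pos_iff.2 hx
  have hfactor : (1 + ‖x‖)⁻¹ - ‖x‖⁻¹ = -((1 + ‖x‖)⁻¹ * ‖x‖⁻¹) := by
    field_simp
    ring
  rw [toBall_inl, NormedSpace.normalize, dist_eq_norm, ← sub_smul, norm_smul, hfactor, norm_neg,
    Real.norm_of_nonneg (by positivity), inv_mul_cancel_right₀ hx'.ne']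
  gcongr
  linarith

theorem isCone_setOf_normalize_mem (U : Set X) :
    IsCone {x : X | x ≠ 0 ∧ NormedSpace.normalize x ∈ U} := by
  rintro x ⟨hx, hxU⟩ r hr
  exact ⟨smul_ne_zero hr.ne' hx, (NormedSpace.normalize_smul_of_pos hr x).symm ▸ hxU⟩

theorem isOpen_setOf_normalize_mem {U : Set X} (hU : IsOpen U) :
    IsOpen {x : X | x ≠ 0 ∧ NormedSpace.normalize x ∈ U} := by
  have hcont : ContinuousOn (fun x : X => NormedSpace.normalize x) {0}ᶜ :=
    (continuous_norm.continuousOn.inv₀ fun _ hx => norm_ne_zero_iff.2 hx).smul continuousOn_id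
  exact hcont.isOpen_inter_preimage isOpen_compl_singleton hU

theorem continuousAt_toBall_inr {b : X} (hb : b ≠ 0) :
    ContinuousAt toBall (inr (rayOfNeZero ℝ b hb)) := by
  refine Metric.tendsto_nhds.2 fun ε hε => ?_
  rw [toBall_inr]
  filter_upwards [eventually_nhds_inr_of_isCone
    (isOpen_setOf_normalize_mem (Metric.isOpen_ball (x := NormedSpace.normalize b) (ε := ε / 2)))
    (isCone_setOf_normalize_mem _) (norm_ne_zero_iff.2 hb)
    ⟨hb, Metric.mem_ball_self (half_pos hε)⟩ (ε / 2)⁻¹]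
  rintro _ (⟨x, ⟨-, hxb⟩, hxR, rfl⟩ | ⟨c, hc, ⟨-, hcb⟩, rfl⟩)
  · calc dist (toBall (inl x)) (NormedSpace.normalize b)
        ≤ dist (toBall (inl x)) (NormedSpace.normalize x) +
            dist (NormedSpace.normalize x) (NormedSpace.normalize b) := dist_triangle _ _ _
      _ < ε / 2 + ε / 2 := by
        refine add_lt_add ((dist_toBall_inl_normalize_le x).trans_lt ?_) hxb
        exact inv_lt_of_inv_lt₀ (half_pos hε) hxR
      _ = ε := add_halves ε
  · rw [toBall_inr]
    exact (Metric.mem_ball.1 hcb).trans (half_lt_self hε)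

theorem continuous_toBall : Continuous (toBall : SphComp X → X) := by
  rw [continuous_iff_continuousAt]
  rintro (x | α)
  · refine (isOpenEmbedding_inl.continuousAt_iff (x := x)).1 (Continuous.continuousAt ?_)
    have hne : ∀ x : X, 1 + ‖x‖ ≠ 0 := fun x => by positivity
    exact ((continuous_const.add continuous_norm).inv₀ hne).smul continuous_id
  · induction α using Module.Ray.ind with
    | h b hb => exact continuousAt_toBall_inr hb

theorem tendsto_inv_one_add_norm {l : Filter X} {b : X} (hb : ‖b‖ = 1)
    (hl : Tendsto (fun x => toBall (inl x)) l (𝓝 b)) :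
    Tendsto (fun x : X => (1 + ‖x‖)⁻¹) l (𝓝 0) := by
  simpa [norm_toBall_inl, hb] using hl.norm.const_sub 1

theorem tendsto_inl_comp_clm_of_tendsto_toBall {W : Type*} [SeminormedAddCommGroup W]
    [NormedSpace ℝ W] (π : X →L[ℝ] W) {a : X} (hπa : ‖π a‖ ≠ 0) {l : Filter X}
    (hl : Tendsto (fun x => toBall (inl x)) l (𝓝 (NormedSpace.normalize a))) :
    Tendsto (fun x => inl (π x)) l
      (𝓝 (inr (rayOfNeZero ℝ (π a) (ne_zero_of_norm_ne_zero hπa)))) := by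
  have ha : a ≠ 0 := by
    rintro rfl
    simp at hπa
  have ht : Tendsto (fun x : X => ‖a‖ * (1 + ‖x‖)⁻¹) l (𝓝[>] 0) := by
    refine tendsto_nhdsWithin_iff.2 ⟨?_, .of_forall fun x => mem_Ioi.2 (by positivity)⟩
    have hnorm : ‖NormedSpace.normalize a‖ = 1 := NormedSpace.norm_normalize_eq_one_iff.2 ha
    simpa only [mul_zero] using (tendsto_inv_one_add_norm hnorm hl).const_mul ‖a‖
  refine tendsto_inl_nhds_inr hπa ht ?_
  have hlim : Tendsto (fun x => ‖a‖ • toBall (inl x)) l (𝓝 a) := by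
    simpa only [NormedSpace.norm_smul_normalize] using hl.const_smul ‖a‖
  refine ((π.continuous.tendsto a).comp hlim).congr fun x => ?_
  rw [Function.comp_apply, toBall_inl, ← mul_smul, map_smul]

theorem comap_inl_nhds_inr {a : X} (ha : a ≠ 0) :
    comap inl (𝓝 (inr (rayOfNeZero ℝ a ha))) =
      comap (fun x => toBall (inl x)) (𝓝 (NormedSpace.normalize a)) := by
  refine le_antisymm ?_ ?_
  · rw [← toBall_inr ha]
    exact tendsto_iff_comap.1 (continuous_toBall.continuousAt.tendsto.comp tendsto_comap)
  · exact tendsto_iff_comap.1 (tendsto_inl_comp_clm_of_tendsto_toBall (.id ℝ X)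
      (norm_ne_zero_iff.2 ha) tendsto_comap)

theorem tendsto_inl_comp_clm {W : Type*} [SeminormedAddCommGroup W] [NormedSpace ℝ W]
    (π : X →L[ℝ] W) {a : X} (ha : a ≠ 0) (hπa : ‖π a‖ ≠ 0) :
    Tendsto (fun x => inl (π x)) (comap inl (𝓝 (inr (rayOfNeZero ℝ a ha))))
      (𝓝 (inr (rayOfNeZero ℝ (π a) (ne_zero_of_norm_ne_zero hπa)))) := by
  rw [comap_inl_nhds_inr ha]
  exact tendsto_inl_comp_clm_of_tendsto_toBall π hπa tendsto_comap

end Normed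

end SphComp

theorem starAlgHom_apply_eq_of_tendsto {Y : Type*} [TopologicalSpace Y]
    {A : StarSubalgebra ℂ (Y →ᵇ ℂ)} [IsClosed (A : Set (Y →ᵇ ℂ))] (χ : A →⋆ₐ[ℂ] ℂ)
    {l : Filter Y} (hbump : ∀ s ∈ l, ∃ w : A, χ w = 1 ∧ (∀ y, ‖(w : Y →ᵇ ℂ) y‖ ≤ 1) ∧
      ∀ y ∉ s, (w : Y →ᵇ ℂ) y = 0)
    {u : A} {c : ℂ} (hu : Tendsto (u : Y →ᵇ ℂ) l (𝓝 c)) : χ u = c := by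
  refine eq_of_forall_dist_le fun ε hε => ?_
  obtain ⟨w, hχw, hw_le, hw_zero⟩ := hbump _ (hu (Metric.closedBall_mem_nhds c hε))
  have hχ : χ ((u - algebraMap ℂ A c) * w) = χ u - c := by
    rw [map_mul, hχw, mul_one, map_sub, AlgHomClass.commutes, Algebra.algebraMap_self_apply]
  rw [dist_eq_norm, ← hχ]
  refine (NonUnitalStarAlgHom.norm_apply_le χ _).trans
    ((BoundedContinuousFunction.norm_le hε.le).2 fun y => ?_)
  have hmul : (((u - algebraMap ℂ A c) * w : A) : Y →ᵇ ℂ) y =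
      ((u : Y →ᵇ ℂ) y - c) * (w : Y →ᵇ ℂ) y := by
    simp [Algebra.algebraMap_eq_smul_one]
  refine (congrArg norm hmul).trans_le ?_
  rw [norm_mul]
  by_cases hy : (u : Y →ᵇ ℂ) y ∈ Metric.closedBall c ε
  · exact (mul_le_of_le_one_right (norm_nonneg _) (hw_le y)).trans (mem_closedBall_iff_norm.1 hy)
  · simpa [hw_zero y hy] using hε.le

section ElementaryInteractions
variable {X : Type*} [NormedAddCommGroup X] [NormedSpace ℝ X]

instance isClosed_eAlgY (Y : Submodule ℝ X) : IsClosed (EAlgY X Y : Set (X →ᵇ ℂ)) :=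
  StarSubalgebra.isClosed_topologicalClosure _

theorem qGenSet_subset_eAlgY (Y : Submodule ℝ X) : QGenSet X Y ⊆ EAlgY X Y :=
  (StarAlgebra.subset_adjoin ℂ _).trans (StarSubalgebra.le_topologicalClosure _)

instance isClosed_coe_bot : IsClosed ((⊥ : Submodule ℝ X) : Set X) := isClosed_singleton

theorem toBall_comp_mem_eAlg (g : X →ᵇ ℂ) :
    g.compContinuous ⟨fun x => SphComp.toBall (SphComp.inl x),
      SphComp.continuous_toBall.comp SphComp.continuous_inl⟩ ∈ EAlg X := by
  refine qGenSet_subset_eAlgY ⊥ ⟨⊥, le_rfl,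
    ⟨fun p => g (quotientBotIsometry (SphComp.toBall p)), ?_⟩, fun x => ?_⟩
  · exact g.continuous.comp (quotientBotIsometry.continuous.comp SphComp.continuous_toBall)
  · exact congrArg g (SphComp.map_toBall_inl quotientBotIsometry.toLinearIsometry
      (Submodule.Quotient.mk x)).symm

theorem exists_bump_eAlg {a : X} (ha : a ≠ 0) {s : Set X}
    (hs : s ∈ comap SphComp.inl (𝓝 (SphComp.inr (rayOfNeZero ℝ a ha)))) :
    ∃ (v : C(SphComp X, ℂ)) (w : EAlg X), (∀ x, (w : X →ᵇ ℂ) x = v (SphComp.inl x)) ∧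
      v (SphComp.inr (rayOfNeZero ℝ a ha)) = 1 ∧ (∀ x, ‖(w : X →ᵇ ℂ) x‖ ≤ 1) ∧
      ∀ x ∉ s, (w : X →ᵇ ℂ) x = 0 := by
  rw [SphComp.comap_inl_nhds_inr] at hs
  obtain ⟨U, hU, hUs⟩ := hs
  obtain ⟨O, hOU, hO, haO⟩ := mem_nhds_iff.1 hU
  obtain ⟨f, hf_zero, hf_one, hf_mem⟩ := exists_bounded_zero_one_of_closed hO.isClosed_compl
    (isClosed_singleton (x := NormedSpace.normalize a)) (by simpa using haO)
  let g : X →ᵇ ℂ := f.comp Complex.ofReal Complex.isometry_ofReal.lipschitz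
  refine ⟨⟨fun p => g (SphComp.toBall p), g.continuous.comp SphComp.continuous_toBall⟩,
    ⟨_, toBall_comp_mem_eAlg g⟩, fun x => rfl, ?_, fun x => ?_, fun x hx => ?_⟩
  · simp [g, SphComp.toBall_inr, hf_one rfl]
  · obtain ⟨hf_nonneg, hf_le_one⟩ := hf_mem (SphComp.toBall (SphComp.inl x))
    simpa [g, abs_of_nonneg hf_nonneg] using hf_le_one
  · have hfx : f (SphComp.toBall (SphComp.inl x)) = 0 := hf_zero fun hxO => hx (hUs (hOU hxO))
    simp [g, hfx]

theorem character_apply_eq_of_tendsto {a : X} (ha : a ≠ 0) (χ : EAlg X →⋆ₐ[ℂ] ℂ)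
    (hχ : ∀ (v : C(SphComp X, ℂ)) (u : EAlg X), (∀ x, (u : X →ᵇ ℂ) x = v (SphComp.inl x)) →
      χ u = v (SphComp.inr (rayOfNeZero ℝ a ha)))
    {u : EAlg X} {c : ℂ}
    (hu : Tendsto (u : X →ᵇ ℂ) (comap SphComp.inl (𝓝 (SphComp.inr (rayOfNeZero ℝ a ha))))
      (𝓝 c)) :
    χ u = c := by
  refine starAlgHom_apply_eq_of_tendsto χ (fun s hs => ?_) hu
  obtain ⟨v, w, hwv, hv_one, hw_le, hw_zero⟩ := exists_bump_eAlg ha hs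
  exact ⟨w, (hχ v w hwv).trans hv_one, hw_le, hw_zero⟩

end ElementaryInteractions

/-- two characters of `ℰ(X)` that both restrict to the character
`χ_α` on `C(X̄)` and agree on `ℰ(X/[α])` are equal. -/
theorem statement16 {X : Type*} [NormedAddCommGroup X] [NormedSpace ℝ X]
    [FiniteDimensional ℝ X] (a : X) (ha : a ≠ 0)
    (χ₁ χ₂ : (EAlg X) →⋆ₐ[ℂ] ℂ)
    (hrestr : ∀ (v : C(SphComp X, ℂ)) (u : EAlg X),
      (∀ x : X, (u : X →ᵇ ℂ) x = v (Sum.inl x)) →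
        χ₁ u = v (Sum.inr (rayOfNeZero ℝ a ha)) ∧
        χ₂ u = v (Sum.inr (rayOfNeZero ℝ a ha)))
    (hagree : ∀ u : EAlg X, (u : X →ᵇ ℂ) ∈ EAlgY X (Submodule.span ℝ {a}) →
        χ₁ u = χ₂ u) :
    χ₁ = χ₂ := by
  refine StarAlgHom.ext_topologicalClosure (map_continuous χ₁) (map_continuous χ₂)
    (StarAlgHom.ext_adjoin ?_)
  rintro ⟨u, hu⟩ ⟨Z, -, v, huv⟩
  change χ₁ ⟨u, _⟩ = χ₂ ⟨u, _⟩
  by_cases haZ : a ∈ Z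
  · have hspan : Submodule.span ℝ {a} ≤ Z := (Submodule.span_singleton_le_iff_mem a Z).2 haZ
    exact hagree _ (qGenSet_subset_eAlgY _ ⟨Z, hspan, v, huv⟩)
  · have hπa : ‖Z.mkQL a‖ ≠ 0 := norm_mkQL_ne_zero Z.closed_of_finiteDimensional haZ
    have hlim : Tendsto u (comap SphComp.inl (𝓝 (SphComp.inr (rayOfNeZero ℝ a ha)))) (𝓝 _) :=
      ((v.continuous.tendsto _).comp (SphComp.tendsto_inl_comp_clm Z.mkQL ha hπa)).congr
        fun x => (huv x).symm
    rw [character_apply_eq_of_tendsto ha χ₁ (fun v u h => (hrestr v u h).1) hlim,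
      character_apply_eq_of_tendsto ha χ₂ (fun v u h => (hrestr v u h).2) hlim]
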